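/- arXiv:1907.00186 — 5 statements merged into one kernel-verified Lean document; each statement's English description precedes it below -/
import Mathlib

section
/- There exists a constant C ≥ 1 such that for all x, y ∈ ℝ^N \ {0} with x ≠ y, the integral ∫₀^∞ (1 + t^{γ/(2s)}|x|^{−γ})(1 + t^{γ/(2s)}|y|^{−γ}) · min( t^{−N/(2s)} , t·|x−y|^{−(N+2s)} ) dt is finite and satisfies C^{−1} H(x,y) ≤ ∫₀^∞ (1 + t^{γ/(2s)}|x|^{−γ})(1 + t^{γ/(2s)}|y|^{−γ}) · min( t^{−N/(2s)} , t·|x−y|^{−(N+2s)} ) dt ≤ C H(x,y). -/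
/-!
The kernel `min (t ^ (-p)) (t * |x-y| ^ (-(N+2s)))`, with `p = N/(2s)`, switches branch at
`T = |x-y| ^ (2s)`, since `|x-y| ^ (-(N+2s)) = T ^ (-(p+1))`. Splitting the integral at `T` gives
the exact moments
`∫₀^∞ t ^ a * min (t ^ (-p)) (t * T ^ (-(p+1))) dt = (1/(a+2) + 1/(p-a-1)) * T ^ (a+1-p)`
for `-2 < a < p - 1` (`hasMoment`). Expanding the product in the integrand produces the moments
`a = 0, γ/(2s), γ/s`, all admissible because `2γ < N - 2s`, and they are positive multiples of the
powers of `|x-y|` in `Hker`. The integral is therefore `Hker` with its terms weighted by three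
positive constants, which gives both bounds.
-/

open MeasureTheory Real Set

noncomputable def Hker (N : ℕ) (s γ : ℝ) (x y : EuclideanSpace ℝ (Fin N)) : ℝ :=
  ‖x - y‖ ^ (-((N : ℝ) - 2*s)) +
    (‖x‖ ^ (-γ) + ‖y‖ ^ (-γ)) * ‖x - y‖ ^ (-((N : ℝ) - 2*s - γ)) +
    ‖x‖ ^ (-γ) * ‖y‖ ^ (-γ) * ‖x - y‖ ^ (-((N : ℝ) - 2*s - 2*γ))

/-- Left of the switching time `T` the linear branch of the minimum is the smaller one. -/
lemma moment_eq_left {a p T t : ℝ} (hp : 0 ≤ p) (ht : 0 < t) (htT : t ≤ T) :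
    t ^ a * min (t ^ (-p)) (t * T ^ (-(p + 1))) = T ^ (-(p + 1)) * t ^ (a + 1) := by
  have hT : 0 < T := ht.trans_le htT
  have h : t * T ^ (-(p + 1)) ≤ t ^ (-p) := by
    calc t * T ^ (-(p + 1)) ≤ t * t ^ (-(p + 1)) := by
          gcongr ?_ * ?_
          exact rpow_le_rpow_of_nonpos ht htT (by linarith)
      _ = t ^ (-p) := by
          nth_rewrite 1 [← rpow_one t]
          rw [← rpow_add ht]; ring_nf
  rw [min_eq_right h, rpow_add_one ht.ne']
  ring

/-- Right of the switching time `T` the pure power is the smaller branch of the minimum. -/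
lemma moment_eq_right {a p T t : ℝ} (hp : 0 ≤ p) (hT : 0 < T) (htT : T < t) :
    t ^ a * min (t ^ (-p)) (t * T ^ (-(p + 1))) = t ^ (a - p) := by
  have ht : 0 < t := hT.trans htT
  have h : t ^ (-p) ≤ t * T ^ (-(p + 1)) := by
    calc t ^ (-p) = t * t ^ (-(p + 1)) := by
          nth_rewrite 2 [← rpow_one t]
          rw [← rpow_add ht]; ring_nf
      _ ≤ t * T ^ (-(p + 1)) := by
          gcongr ?_ * ?_
          exact rpow_le_rpow_of_nonpos hT htT.le (by linarith)
  rw [min_eq_left h, ← rpow_add ht]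
  ring_nf

lemma hasMoment {a p T : ℝ} (ha : -2 < a) (hp : 0 ≤ p) (hap : a + 1 < p) (hT : 0 < T) :
    IntegrableOn (fun t : ℝ => t ^ a * min (t ^ (-p)) (t * T ^ (-(p + 1)))) (Ioi 0) ∧
    ∫ t in Ioi (0:ℝ), t ^ a * min (t ^ (-p)) (t * T ^ (-(p + 1))) =
      (1 / (a + 2) + 1 / (p - a - 1)) * T ^ (a + 1 - p) := by
  have eqL : EqOn (fun t : ℝ => t ^ a * min (t ^ (-p)) (t * T ^ (-(p + 1))))
      (fun t => T ^ (-(p + 1)) * t ^ (a + 1)) (Ioc 0 T) :=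
    fun t ht => moment_eq_left hp ht.1 ht.2
  have eqR : EqOn (fun t : ℝ => t ^ a * min (t ^ (-p)) (t * T ^ (-(p + 1))))
      (fun t => t ^ (a - p)) (Ioi T) :=
    fun t ht => moment_eq_right hp hT ht
  have intL : IntegrableOn (fun t : ℝ => t ^ a * min (t ^ (-p)) (t * T ^ (-(p + 1)))) (Ioc 0 T) := by
    rw [integrableOn_congr_fun eqL measurableSet_Ioc]
    exact ((intervalIntegrable_iff_integrableOn_Ioc_of_le hT.le).1
      (intervalIntegral.intervalIntegrable_rpow' (by linarith))).const_mul _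
  have intR : IntegrableOn (fun t : ℝ => t ^ a * min (t ^ (-p)) (t * T ^ (-(p + 1)))) (Ioi T) := by
    rw [integrableOn_congr_fun eqR measurableSet_Ioi]
    exact integrableOn_Ioi_rpow_of_lt (by linarith) hT
  have hU : Ioi (0:ℝ) = Ioc 0 T ∪ Ioi T := (Ioc_union_Ioi_eq_Ioi hT.le).symm
  refine ⟨hU ▸ intL.union intR, ?_⟩
  rw [hU, setIntegral_union (Ioc_disjoint_Ioi le_rfl) measurableSet_Ioi intL intR,
    setIntegral_congr_fun measurableSet_Ioc eqL, setIntegral_congr_fun measurableSet_Ioi eqR,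
    integral_Ioi_rpow_of_lt (by linarith) hT, integral_const_mul,
    ← intervalIntegral.integral_of_le hT.le, integral_rpow (Or.inl (by linarith)),
    zero_rpow (by linarith)]
  have e1 : T ^ (-(p + 1)) * T ^ (a + 1 + 1) = T ^ (a + 1 - p) := by
    rw [← rpow_add hT]; ring_nf
  have e2 : a - p + 1 = a + 1 - p := by ring
  rw [e2, sub_zero, ← mul_div_assoc, e1]
  have h1 : a + 1 + 1 ≠ 0 := by linarith
  have h2 : a + 2 ≠ 0 := by linarith
  have h3 : a + 1 - p ≠ 0 := by linarith
  have h4 : p - a - 1 ≠ 0 := by linarith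
  field_simp
  ring

theorem heat_kernel_time_integral_two_sided
    (N : ℕ) (s γ : ℝ) (hs : s ∈ Set.Ioo (0:ℝ) 1)
    (hN : 2 * s < (N : ℝ)) (hγ : γ ∈ Set.Ioo (0:ℝ) (((N : ℝ) - 2*s)/2)) :
    ∃ C : ℝ, 1 ≤ C ∧ ∀ x y : EuclideanSpace ℝ (Fin N), x ≠ 0 → y ≠ 0 → x ≠ y →
      IntegrableOn
        (fun t : ℝ => (1 + t ^ (γ/(2*s)) * ‖x‖ ^ (-γ)) * (1 + t ^ (γ/(2*s)) * ‖y‖ ^ (-γ)) *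
          min (t ^ (-((N : ℝ)/(2*s)))) (t * ‖x - y‖ ^ (-((N : ℝ) + 2*s))))
        (Set.Ioi 0) ∧
      C⁻¹ * Hker N s γ x y ≤
        (∫ t in Set.Ioi (0:ℝ),
          (1 + t ^ (γ/(2*s)) * ‖x‖ ^ (-γ)) * (1 + t ^ (γ/(2*s)) * ‖y‖ ^ (-γ)) *
          min (t ^ (-((N : ℝ)/(2*s)))) (t * ‖x - y‖ ^ (-((N : ℝ) + 2*s)))) ∧
      (∫ t in Set.Ioi (0:ℝ),
          (1 + t ^ (γ/(2*s)) * ‖x‖ ^ (-γ)) * (1 + t ^ (γ/(2*s)) * ‖y‖ ^ (-γ)) *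
          min (t ^ (-((N : ℝ)/(2*s)))) (t * ‖x - y‖ ^ (-((N : ℝ) + 2*s)))) ≤
        C * Hker N s γ x y := by
  obtain ⟨hs0, -⟩ := hs
  obtain ⟨hγ0, hγ1⟩ := hγ
  have h2s : 0 < 2 * s := by linarith
  set p : ℝ := (N : ℝ) / (2 * s) with hp
  set b : ℝ := γ / (2 * s) with hb
  have hNp : (N : ℝ) = 2 * s * p := by rw [hp]; field_simp
  have hγb : γ = 2 * s * b := by rw [hb]; field_simp
  have hb0 : 0 < b := div_pos hγ0 h2s
  have hbp : 2 * b + 1 < p := by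
    have h : 2 * s * (2 * b + 1) < 2 * s * p := by rw [← hNp]; linarith
    exact lt_of_mul_lt_mul_left h h2s.le
  have hp0 : 0 ≤ p := by linarith
  -- the constant of the moment of order `a`
  let c : ℝ → ℝ := fun a => 1 / (a + 2) + 1 / (p - a - 1)
  have hc : ∀ a, -2 < a → a + 1 < p → 0 < c a := fun a h1 h2 =>
    add_pos (one_div_pos.2 (by linarith)) (one_div_pos.2 (by linarith))
  have c0 := hc 0 (by linarith) (by linarith)
  have c1 := hc b (by linarith) (by linarith)
  have c2 := hc (2 * b) (by linarith) (by linarith)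
  set C : ℝ := 1 + (c 0 + c b + c (2 * b)) + ((c 0)⁻¹ + (c b)⁻¹ + (c (2 * b))⁻¹) with hC
  have i0 := inv_pos.2 c0
  have i1 := inv_pos.2 c1
  have i2 := inv_pos.2 c2
  have hC1 : 1 ≤ C := by linarith
  have u0 : c 0 ≤ C := by linarith
  have u1 : c b ≤ C := by linarith
  have u2 : c (2 * b) ≤ C := by linarith
  have l0 : C⁻¹ ≤ c 0 := inv_le_of_inv_le₀ c0 (by linarith)
  have l1 : C⁻¹ ≤ c b := inv_le_of_inv_le₀ c1 (by linarith)
  have l2 : C⁻¹ ≤ c (2 * b) := inv_le_of_inv_le₀ c2 (by linarith)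
  refine ⟨C, hC1, fun x y hx hy hxy => ?_⟩
  have hr : 0 < ‖x - y‖ := norm_pos_iff.2 (sub_ne_zero.2 hxy)
  unfold Hker
  have hX : 0 ≤ ‖x‖ ^ (-γ) := by positivity
  have hY : 0 ≤ ‖y‖ ^ (-γ) := by positivity
  generalize ‖x‖ ^ (-γ) = X at hX ⊢
  generalize ‖y‖ ^ (-γ) = Y at hY ⊢
  generalize ‖x - y‖ = r at hr ⊢
  have hT : 0 < r ^ (2 * s) := rpow_pos_of_pos hr _
  have eK : r ^ (-((N : ℝ) + 2 * s)) = (r ^ (2 * s)) ^ (-(p + 1)) := by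
    rw [← rpow_mul hr.le, hNp]; ring_nf
  have e0 : r ^ (-((N : ℝ) - 2 * s)) = (r ^ (2 * s)) ^ (0 + 1 - p) := by
    rw [← rpow_mul hr.le, hNp]; ring_nf
  have e1 : r ^ (-((N : ℝ) - 2 * s - γ)) = (r ^ (2 * s)) ^ (b + 1 - p) := by
    rw [← rpow_mul hr.le, hNp, hγb]; ring_nf
  have e2 : r ^ (-((N : ℝ) - 2 * s - 2 * γ)) = (r ^ (2 * s)) ^ (2 * b + 1 - p) := by
    rw [← rpow_mul hr.le, hNp, hγb]; ring_nf
  rw [eK, e0, e1, e2]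
  generalize r ^ (2 * s) = T at hT ⊢
  obtain ⟨I0, J0⟩ := hasMoment (a := 0) (by linarith) hp0 (by linarith) hT
  obtain ⟨I1, J1⟩ := hasMoment (a := b) (by linarith) hp0 (by linarith) hT
  obtain ⟨I2, J2⟩ := hasMoment (a := 2 * b) (by linarith) hp0 (by linarith) hT
  have hE : EqOn (fun t : ℝ => (1 + t ^ b * X) * (1 + t ^ b * Y) *
        min (t ^ (-p)) (t * T ^ (-(p + 1))))
      (fun t => t ^ (0:ℝ) * min (t ^ (-p)) (t * T ^ (-(p + 1))) +
        (X + Y) * (t ^ b * min (t ^ (-p)) (t * T ^ (-(p + 1)))) +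
        X * Y * (t ^ (2 * b) * min (t ^ (-p)) (t * T ^ (-(p + 1))))) (Ioi 0) := by
    intro t ht
    have h2 : t ^ (2 * b) = t ^ b * t ^ b := by
      rw [← rpow_add ht]; ring_nf
    simp only [rpow_zero, h2]
    ring
  have J : ∫ t in Ioi (0:ℝ), (1 + t ^ b * X) * (1 + t ^ b * Y) *
        min (t ^ (-p)) (t * T ^ (-(p + 1))) =
      c 0 * T ^ (0 + 1 - p) + (X + Y) * (c b * T ^ (b + 1 - p)) +
        X * Y * (c (2 * b) * T ^ (2 * b + 1 - p)) := by
    rw [setIntegral_congr_fun measurableSet_Ioi hE,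
      integral_add ?_ (I2.const_mul _),
      integral_add I0 (I1.const_mul _), integral_const_mul, integral_const_mul, J0, J1, J2]
    exact I0.add (I1.const_mul _)
  refine ⟨?_, ?_, ?_⟩
  · rw [integrableOn_congr_fun hE measurableSet_Ioi]
    exact (I0.add (I1.const_mul _)).add (I2.const_mul _)
  all_goals
    rw [J]
    have t0 : 0 ≤ T ^ (0 + 1 - p) := by positivity
    have t1 : 0 ≤ (X + Y) * T ^ (b + 1 - p) := by positivity
    have t2 : 0 ≤ X * Y * T ^ (2 * b + 1 - p) := by positivity
  · linarith [mul_le_mul_of_nonneg_right l0 t0, mul_le_mul_of_nonneg_right l1 t1,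
      mul_le_mul_of_nonneg_right l2 t2]
  · linarith [mul_le_mul_of_nonneg_right u0 t0, mul_le_mul_of_nonneg_right u1 t1,
      mul_le_mul_of_nonneg_right u2 t2]
end

section
/- For every compact set K ⊂ ℝ^N and every R > 0 there exists a constant C > 0 such that for all x ∈ ℝ^N with 0 < |x| ≤ R, one has ∫_K H(x,y) dy ≤ C·|x|^{−γ}. -/
/-!
Put `a = N - 2s` and `z = x - y`. For `p, q > 0` the larger of `|y|⁻¹`, `|z|⁻¹` dominates, so
`|y|^{-p} |z|^{-q} ≤ |y|^{-(p+q)} + |z|^{-(p+q)}` (`rpow_neg_mul_rpow_neg_le`). Applied to the mixed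
terms of the kernel this gives
`H(x,y) ≤ (2|z|^{-a} + |y|^{-a}) + |x|^{-γ} (2|z|^{-(a-γ)} + |y|^{-(a-γ)})`.
Since `a < N`, all powers on the right are integrable on bounded sets, and for `y ∈ K`, `|x| ≤ R`
both `y` and `z` stay in one fixed ball around the origin. Their integrals are therefore bounded
uniformly in `x` by integrals over that ball (`setLIntegral_rpow_sub_le`). The terms without
a factor `|x|^{-γ}` are absorbed using `1 ≤ R^γ |x|^{-γ}`.
-/

open MeasureTheory Real Set

/-- At `u = 0` or `v = 0` the left side vanishes because `0 ^ (-p) = 0` for `p ≠ 0`. -/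
lemma rpow_neg_mul_rpow_neg_le {u v p q : ℝ} (hu : 0 ≤ u) (hv : 0 ≤ v) (hp : 0 < p)
    (hq : 0 < q) : u ^ (-p) * v ^ (-q) ≤ u ^ (-(p + q)) + v ^ (-(p + q)) := by
  have hu' := Real.rpow_nonneg hu (-(p + q))
  have hv' := Real.rpow_nonneg hv (-(p + q))
  rcases hu.eq_or_lt with rfl | hu0
  · rw [Real.zero_rpow (by linarith : -p ≠ 0), zero_mul]; positivity
  rcases hv.eq_or_lt with rfl | hv0
  · rw [Real.zero_rpow (by linarith : -q ≠ 0), mul_zero]; positivity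
  rcases le_total u v with h | h
  · have h1 : v ^ (-q) ≤ u ^ (-q) := Real.rpow_le_rpow_of_nonpos hu0 h (by linarith)
    have h2 : u ^ (-p) * u ^ (-q) = u ^ (-(p + q)) := by
      rw [← Real.rpow_add hu0]; ring_nf
    have h3 := mul_le_mul_of_nonneg_left h1 (Real.rpow_nonneg hu (-p))
    linarith
  · have h1 : u ^ (-p) ≤ v ^ (-p) := Real.rpow_le_rpow_of_nonpos hv0 h (by linarith)
    have h2 : v ^ (-p) * v ^ (-q) = v ^ (-(p + q)) := by
      rw [← Real.rpow_add hv0]; ring_nf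
    have h3 := mul_le_mul_of_nonneg_right h1 (Real.rpow_nonneg hv (-q))
    linarith

lemma setLIntegral_ball_rpow_ne_top {N : ℕ} (hN : 1 ≤ N) {b : ℝ} (hb : b < N) (L : ℝ) :
    ∫⁻ y in Metric.ball (0 : EuclideanSpace ℝ (Fin N)) L, ENNReal.ofReal (‖y‖ ^ (-b)) ≠ ⊤ := by
  have h : IntegrableOn (fun y : EuclideanSpace ℝ (Fin N) => ‖y‖ ^ (-b)) (Metric.ball 0 L) := by
    refine integrableOn_ball_of_norm_le_rpow (C := 1) (α := b) (by simpa using hN)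
      (by simpa using hb) (Filter.Eventually.of_forall fun y => ?_) ?_
    · rw [Real.norm_of_nonneg (by positivity), one_mul]
    · exact (measurable_norm.pow_const _).aestronglyMeasurable
  exact h.lintegral_lt_top.ne

/-- The substitution `y ↦ x - y` moves the singularity to the origin, so the bound does not depend
on `x`. -/
lemma setLIntegral_rpow_sub_le {N : ℕ} {K : Set (EuclideanSpace ℝ (Fin N))}
    (hK : MeasurableSet K) (x : EuclideanSpace ℝ (Fin N)) {L : ℝ} (hL : ∀ y ∈ K, ‖x - y‖ < L) (b : ℝ) :
    ∫⁻ y in K, ENNReal.ofReal (‖x - y‖ ^ (-b)) ≤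
      ∫⁻ y in Metric.ball (0 : EuclideanSpace ℝ (Fin N)) L, ENNReal.ofReal (‖y‖ ^ (-b)) := by
  set f : EuclideanSpace ℝ (Fin N) → ENNReal := fun y => ENNReal.ofReal (‖y‖ ^ (-b))
  calc ∫⁻ y in K, ENNReal.ofReal (‖x - y‖ ^ (-b))
      ≤ ∫⁻ y, (Metric.ball 0 L).indicator f (x - y) := by
        refine le_trans ?_ (setLIntegral_le_lintegral K _)
        refine lintegral_mono_ae ?_
        have hmem : ∀ᵐ y ∂(volume.restrict K), ‖x - y‖ < L := by
          exact ae_restrict_of_forall_mem hK hL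
        filter_upwards [hmem] with y hy
        rw [Set.indicator_of_mem (by simpa using hy)]
    _ = ∫⁻ y, (Metric.ball 0 L).indicator f y := lintegral_sub_left_eq_self _ x
    _ = _ := lintegral_indicator Metric.isOpen_ball.measurableSet f

lemma Hker_le {N : ℕ} {s γ : ℝ} (h0 : 0 < γ) (h1 : 2 * γ < N - 2 * s)
    (x y : EuclideanSpace ℝ (Fin N)) :
    Hker N s γ x y ≤ (2 * ‖x - y‖ ^ (-((N : ℝ) - 2 * s)) + ‖0 - y‖ ^ (-((N : ℝ) - 2 * s))) +
      ‖x‖ ^ (-γ) * (2 * ‖x - y‖ ^ (-((N : ℝ) - 2 * s - γ)) +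
        ‖0 - y‖ ^ (-((N : ℝ) - 2 * s - γ))) := by
  have hA := rpow_neg_mul_rpow_neg_le (norm_nonneg y) (norm_nonneg (x - y)) h0
    (by linarith : 0 < (N : ℝ) - 2 * s - γ)
  have hB := rpow_neg_mul_rpow_neg_le (norm_nonneg y) (norm_nonneg (x - y)) h0
    (by linarith : 0 < (N : ℝ) - 2 * s - 2 * γ)
  rw [show γ + ((N : ℝ) - 2 * s - γ) = N - 2 * s by ring] at hA
  rw [show γ + ((N : ℝ) - 2 * s - 2 * γ) = N - 2 * s - γ by ring] at hB
  have hB' := mul_le_mul_of_nonneg_left hB (Real.rpow_nonneg (norm_nonneg x) (-γ))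
  rw [zero_sub, norm_neg]
  unfold Hker
  linarith

theorem green_kernel_interior_bound
    (N : ℕ) (s γ : ℝ) (hs : s ∈ Set.Ioo (0:ℝ) 1)
    (hN : 2 * s < (N : ℝ)) (hγ : γ ∈ Set.Ioo (0:ℝ) (((N : ℝ) - 2*s)/2))
    (K : Set (EuclideanSpace ℝ (Fin N))) (hK : IsCompact K) (R : ℝ) (hR : 0 < R) :
    ∃ C : ℝ, 0 < C ∧ ∀ x : EuclideanSpace ℝ (Fin N), x ≠ 0 → ‖x‖ ≤ R →
      ∫⁻ y in K, ENNReal.ofReal (Hker N s γ x y) ≤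
        ENNReal.ofReal (C * ‖x‖ ^ (-γ)) := by
  obtain ⟨hs0, -⟩ := hs
  obtain ⟨hγ0, hγ1⟩ := hγ
  have hN1 : 1 ≤ N := by
    have : (0 : ℝ) < N := by linarith
    exact_mod_cast this
  obtain ⟨M, hM⟩ := hK.isBounded.exists_norm_le
  -- A radius with `‖x - y‖ < L` for all `y ∈ K` and `‖x‖ ≤ R`, including `x = 0`.
  set L : ℝ := R + M + 1
  set I : ℝ → ENNReal := fun b =>
    ∫⁻ y in Metric.ball (0 : EuclideanSpace ℝ (Fin N)) L, ENNReal.ofReal (‖y‖ ^ (-b))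
  set a : ℝ := (N : ℝ) - 2 * s
  have hIa : I a ≠ ⊤ := setLIntegral_ball_rpow_ne_top hN1 (by linarith) L
  have hIb : I (a - γ) ≠ ⊤ := setLIntegral_ball_rpow_ne_top hN1 (by linarith) L
  have hbound : ∀ x : EuclideanSpace ℝ (Fin N), ‖x‖ ≤ R → ∀ b : ℝ,
      ∫⁻ y in K, ENNReal.ofReal (‖x - y‖ ^ (-b)) ≤ I b := fun x hx b =>
    setLIntegral_rpow_sub_le hK.measurableSet x (fun y hy => by
      have := norm_sub_le x y
      have := hM y hy
      linarith) b
  have hmeas : ∀ (x : EuclideanSpace ℝ (Fin N)) (b : ℝ),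
      Measurable fun y => ENNReal.ofReal (‖x - y‖ ^ (-b)) := fun x b =>
    ((measurable_const.sub measurable_id).norm.pow_const _).ennreal_ofReal
  refine ⟨3 * (I a).toReal * R ^ γ + 3 * (I (a - γ)).toReal + 1, by positivity, ?_⟩
  intro x hx hxR
  have hxpos : 0 < ‖x‖ := norm_pos_iff.mpr hx
  have hone : 1 ≤ R ^ γ * ‖x‖ ^ (-γ) := by
    rw [Real.rpow_neg hxpos.le, ← div_eq_mul_inv, one_le_div (by positivity)]
    exact Real.rpow_le_rpow hxpos.le hxR hγ0.le
  calc ∫⁻ y in K, ENNReal.ofReal (Hker N s γ x y)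
      ≤ ∫⁻ y in K, ((2 * ENNReal.ofReal (‖x - y‖ ^ (-a)) + ENNReal.ofReal (‖0 - y‖ ^ (-a))) +
          ENNReal.ofReal (‖x‖ ^ (-γ)) * (2 * ENNReal.ofReal (‖x - y‖ ^ (-(a - γ))) +
            ENNReal.ofReal (‖0 - y‖ ^ (-(a - γ))))) := by
        refine lintegral_mono fun y => ?_
        refine (ENNReal.ofReal_le_ofReal (Hker_le hγ0 (by linarith) x y)).trans_eq ?_
        rw [ENNReal.ofReal_add (by positivity) (by positivity),
          ENNReal.ofReal_add (by positivity) (by positivity),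
          ENNReal.ofReal_mul (by positivity), ENNReal.ofReal_mul (by positivity),
          ENNReal.ofReal_add (by positivity) (by positivity),
          ENNReal.ofReal_mul (by positivity), ENNReal.ofReal_ofNat]
    _ = (2 * (∫⁻ y in K, ENNReal.ofReal (‖x - y‖ ^ (-a))) +
          ∫⁻ y in K, ENNReal.ofReal (‖0 - y‖ ^ (-a))) +
          ENNReal.ofReal (‖x‖ ^ (-γ)) *
            (2 * (∫⁻ y in K, ENNReal.ofReal (‖x - y‖ ^ (-(a - γ)))) +
            ∫⁻ y in K, ENNReal.ofReal (‖0 - y‖ ^ (-(a - γ)))) := by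
        have m1 := hmeas x a
        have m2 := hmeas x (a - γ)
        have m3 : Measurable fun y => 2 * ENNReal.ofReal (‖x - y‖ ^ (-a)) +
            ENNReal.ofReal (‖0 - y‖ ^ (-a)) := (m1.const_mul 2).add (hmeas 0 a)
        have m4 : Measurable fun y => 2 * ENNReal.ofReal (‖x - y‖ ^ (-(a - γ))) +
            ENNReal.ofReal (‖0 - y‖ ^ (-(a - γ))) := (m2.const_mul 2).add (hmeas 0 (a - γ))
        rw [lintegral_add_left m3,
          lintegral_add_left (m1.const_mul 2), lintegral_const_mul _ m1,
          lintegral_const_mul _ m4,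
          lintegral_add_left (m2.const_mul 2), lintegral_const_mul _ m2]
    _ ≤ (2 * I a + I a) + ENNReal.ofReal (‖x‖ ^ (-γ)) * (2 * I (a - γ) + I (a - γ)) := by
        have h0 : ‖(0 : EuclideanSpace ℝ (Fin N))‖ ≤ R := by simpa using hR.le
        gcongr
        · exact hbound x hxR a
        · exact hbound 0 h0 a
        · exact hbound x hxR (a - γ)
        · exact hbound 0 h0 (a - γ)
    _ = ENNReal.ofReal (3 * (I a).toReal + ‖x‖ ^ (-γ) * (3 * (I (a - γ)).toReal)) := by
        rw [ENNReal.ofReal_add (by positivity) (by positivity),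
          ENNReal.ofReal_mul (by positivity), ENNReal.ofReal_mul (by positivity),
          ENNReal.ofReal_mul (by positivity), ENNReal.ofReal_toReal hIa,
          ENNReal.ofReal_toReal hIb, ENNReal.ofReal_ofNat]
        ring
    _ ≤ _ := by
        refine ENNReal.ofReal_le_ofReal ?_
        have h1 := mul_le_mul_of_nonneg_left hone
          (by positivity : 0 ≤ 3 * (I a).toReal)
        have h2 : 0 ≤ ‖x‖ ^ (-γ) := by positivity
        linarith
end

section
/- Let φ : ℝ^N → ℝ be a continuous function with compact support. Then ∫_{ℝ^N} |x|^{−2s} · ( ∫_{ℝ^N} H(x,y)·|φ(y)| dy )² dx < ∞. -/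
/-!
Write `a = N - 2s` and let `φ` be supported in the ball of radius `R ≥ 1`. The potential
`u(x) = ∫ H(x,y) |φ(y)| dy` is `O(|x|^{-γ})` for `|x| ≤ 2R` and `O(|x|^{-(a-γ)})` for `|x| > 2R`.

* Near the origin the kernel satisfies `H(x,y) ≤ C |x|^{-γ} (|x-y|^{-a} + |y|^{-a})`
  (`kernel_near`), because the mixed product `|y|^{-γ} |x-y|^{-(a-γ)}` is at most the larger of
  the two pure powers. Since `a < N`, both powers are locally integrable, with an integral over
  bounded sets that is uniform in `x` by translation invariance.
* Far away `|x-y| ≥ |x|/2` on the support of `φ`, so `H(x,y) ≤ C (1 + |y|^{-γ}) |x|^{-(a-γ)}`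
  (`kernel_far`), and `|y|^{-γ}` is locally integrable.

Hence `|x|^{-2s} u(x)²` is dominated by `|x|^{-(2s+2γ)}` near the origin, and by
`|x|^{-(2s+2(a-γ))}` at infinity. The condition `2γ < N - 2s` gives `2s + 2γ < N` as well as
`2s + 2(a-γ) > N`, so both are integrable in their respective regions.
-/

open MeasureTheory Real Set

/-- The truncated power `z ↦ |z|^{-p} 1_{|z| ≤ r}`. -/
noncomputable def truncPow {N : ℕ} (p r : ℝ) : EuclideanSpace ℝ (Fin N) → ℝ :=
  (Metric.closedBall 0 r).indicator fun z => ‖z‖ ^ (-p)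

lemma truncPow_nonneg {N : ℕ} (p r : ℝ) (z : EuclideanSpace ℝ (Fin N)) : 0 ≤ truncPow p r z :=
  Set.indicator_nonneg (fun _ _ => by positivity) z

lemma truncPow_of_le {N : ℕ} {p r : ℝ} {z : EuclideanSpace ℝ (Fin N)} (hz : ‖z‖ ≤ r) :
    truncPow p r z = ‖z‖ ^ (-p) := by
  simp [truncPow, hz]

lemma integrable_truncPow {N : ℕ} {p : ℝ} (hN : 1 ≤ N) (hp : p < N) (r : ℝ) :
    Integrable (truncPow p r : EuclideanSpace ℝ (Fin N) → ℝ) := by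
  have h : LocallyIntegrable (fun z : EuclideanSpace ℝ (Fin N) => ‖z‖ ^ (-p)) := by
    refine locallyIntegrable_of_norm_le_rpow (C := 1) (α := p) (by simpa using hN)
      (by simpa using hp) (Filter.Eventually.of_forall fun x => ?_)
      (by fun_prop : Measurable _).aestronglyMeasurable
    rw [one_mul, Real.norm_of_nonneg (by positivity)]
  exact (h.integrableOn_isCompact (isCompact_closedBall 0 r)).integrable_indicator
    Metric.isClosed_closedBall.measurableSet

/-- The mixed product is at most the pure power of the smaller of the two bases. -/
lemma mixed_le {t v a γ : ℝ} (ht : 0 < t) (hv : 0 < v) (hγ : 0 < γ) (hγa : γ < a) :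
    v ^ (-γ) * t ^ (-(a - γ)) ≤ t ^ (-a) + v ^ (-a) := by
  have key (w : ℝ) (hw : 0 < w) : w ^ (-γ) * w ^ (-(a - γ)) = w ^ (-a) := by
    rw [← Real.rpow_add hw]; ring_nf
  have h1 : 0 < t ^ (-a) := by positivity
  have h2 : 0 < v ^ (-a) := by positivity
  rcases le_total t v with h | h
  · have : v ^ (-γ) ≤ t ^ (-γ) := Real.rpow_le_rpow_of_nonpos ht h (by linarith)
    calc _ ≤ t ^ (-γ) * t ^ (-(a - γ)) := by gcongr
      _ ≤ _ := by rw [key t ht]; linarith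
  · have : t ^ (-(a - γ)) ≤ v ^ (-(a - γ)) := Real.rpow_le_rpow_of_nonpos hv h (by linarith)
    calc _ ≤ v ^ (-γ) * v ^ (-(a - γ)) := by gcongr
      _ ≤ _ := by rw [key v hv]; linarith

/-- Kernel bound for `x` in a bounded region, with `t = |x-y|`, `u = |x|`, `v = |y|`. -/
lemma kernel_near {t u v a γ C : ℝ} (ht : 0 < t) (hu : 0 < u) (hv : 0 < v) (htC : t ≤ C)
    (huC : u ≤ C) (hγ : 0 < γ) (hγa : γ < a) :
    t ^ (-a) + (u ^ (-γ) + v ^ (-γ)) * t ^ (-(a - γ)) + u ^ (-γ) * v ^ (-γ) * t ^ (-(a - 2 * γ))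
      ≤ 4 * C ^ γ * u ^ (-γ) * (t ^ (-a) + v ^ (-a)) := by
  have hC : 0 < C := ht.trans_le htC
  have hw := mixed_le ht hv hγ hγa
  set w := t ^ (-a) + v ^ (-a) with hwdef
  have hw0 : 0 < w := by positivity
  have htw : t ^ (-a) ≤ w := by
    have : 0 < v ^ (-a) := by positivity
    linarith
  have hone : 1 ≤ C ^ γ * u ^ (-γ) := by
    calc (1 : ℝ) = u ^ γ * u ^ (-γ) := by rw [← Real.rpow_add hu]; simp
      _ ≤ _ := by gcongr
  have htγ : t ^ γ ≤ C ^ γ := by gcongr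
  have e1 : t ^ (-(a - γ)) = t ^ γ * t ^ (-a) := by rw [← Real.rpow_add ht]; ring_nf
  have e2 : t ^ (-(a - 2 * γ)) = t ^ γ * t ^ (-(a - γ)) := by rw [← Real.rpow_add ht]; ring_nf
  have T1 : t ^ (-a) ≤ C ^ γ * u ^ (-γ) * w := htw.trans (le_mul_of_one_le_left hw0.le hone)
  have T2 : u ^ (-γ) * t ^ (-(a - γ)) ≤ C ^ γ * u ^ (-γ) * w := by
    rw [e1]
    calc u ^ (-γ) * (t ^ γ * t ^ (-a)) ≤ u ^ (-γ) * (C ^ γ * w) := by gcongr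
      _ = _ := by ring
  have T3 : v ^ (-γ) * t ^ (-(a - γ)) ≤ C ^ γ * u ^ (-γ) * w :=
    hw.trans (le_mul_of_one_le_left hw0.le hone)
  have T4 : u ^ (-γ) * v ^ (-γ) * t ^ (-(a - 2 * γ)) ≤ C ^ γ * u ^ (-γ) * w := by
    rw [e2]
    calc u ^ (-γ) * v ^ (-γ) * (t ^ γ * t ^ (-(a - γ)))
        = u ^ (-γ) * (t ^ γ * (v ^ (-γ) * t ^ (-(a - γ)))) := by ring
      _ ≤ u ^ (-γ) * (C ^ γ * w) := by gcongr
      _ = _ := by ring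
  linarith

/-- Kernel bound for `x` far from the support of `φ`, with `t = |x-y|`, `u = |x|`, `v = |y|`. -/
lemma kernel_far {t u v a γ : ℝ} (hu : 1 ≤ u) (hv : 0 < v) (hut : u / 2 ≤ t)
    (hγ : 0 < γ) (hγa : 2 * γ < a) :
    t ^ (-a) + (u ^ (-γ) + v ^ (-γ)) * t ^ (-(a - γ)) + u ^ (-γ) * v ^ (-γ) * t ^ (-(a - 2 * γ))
      ≤ 2 * 2 ^ a * u ^ (-(a - γ)) * (1 + v ^ (-γ)) := by
  have hu0 : 0 < u := by linarith
  have key (b : ℝ) (hb : 0 ≤ b) (hba : b ≤ a) : t ^ (-b) ≤ 2 ^ a * u ^ (-b) := by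
    calc t ^ (-b) ≤ (u / 2) ^ (-b) :=
          Real.rpow_le_rpow_of_nonpos (by positivity) hut (by linarith)
      _ = 2 ^ b * u ^ (-b) := by
          rw [Real.div_rpow hu0.le (by norm_num), Real.rpow_neg (by norm_num : (0:ℝ) ≤ 2)]
          field_simp
      _ ≤ 2 ^ a * u ^ (-b) := by
          gcongr
          norm_num
  have hexp : u ^ (-a) ≤ u ^ (-(a - γ)) :=
    Real.rpow_le_rpow_of_exponent_le hu (by linarith)
  have T1 : t ^ (-a) ≤ 2 ^ a * u ^ (-(a - γ)) :=
    (key a (by linarith) le_rfl).trans (by gcongr)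
  have T2 : u ^ (-γ) * t ^ (-(a - γ)) ≤ 2 ^ a * u ^ (-(a - γ)) := by
    calc _ ≤ u ^ (-γ) * (2 ^ a * u ^ (-(a - γ))) := by
          gcongr; exact key _ (by linarith) (by linarith)
      _ = 2 ^ a * (u ^ (-γ) * u ^ (-(a - γ))) := by ring
      _ = 2 ^ a * u ^ (-a) := by rw [← Real.rpow_add hu0]; ring_nf
      _ ≤ _ := by gcongr
  have T3 : v ^ (-γ) * t ^ (-(a - γ)) ≤ v ^ (-γ) * (2 ^ a * u ^ (-(a - γ))) := by
    gcongr; exact key _ (by linarith) (by linarith)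
  have T4 : u ^ (-γ) * v ^ (-γ) * t ^ (-(a - 2 * γ)) ≤ v ^ (-γ) * (2 ^ a * u ^ (-(a - γ))) := by
    calc _ ≤ u ^ (-γ) * v ^ (-γ) * (2 ^ a * u ^ (-(a - 2 * γ))) := by
          gcongr; exact key _ (by linarith) (by linarith)
      _ = v ^ (-γ) * (2 ^ a * (u ^ (-γ) * u ^ (-(a - 2 * γ)))) := by ring
      _ = _ := by rw [← Real.rpow_add hu0]; ring_nf
  linarith

lemma Hker_nonneg (N : ℕ) (s γ : ℝ) (x y : EuclideanSpace ℝ (Fin N)) : 0 ≤ Hker N s γ x y := by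
  unfold Hker; positivity

theorem green_potential_weighted_L2_finite
    (N : ℕ) (s γ : ℝ) (hs : s ∈ Set.Ioo (0:ℝ) 1)
    (hN : 2 * s < (N : ℝ)) (hγ : γ ∈ Set.Ioo (0:ℝ) (((N : ℝ) - 2*s)/2))
    (φ : EuclideanSpace ℝ (Fin N) → ℝ) (hφ : Continuous φ)
    (hφc : HasCompactSupport φ) :
    ∫⁻ x : EuclideanSpace ℝ (Fin N),
        ENNReal.ofReal (‖x‖ ^ (-(2*s)) * (∫ y, Hker N s γ x y * |φ y|) ^ 2) < ⊤ := by
  obtain ⟨hs0, -⟩ := hs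
  obtain ⟨hγ0, hγ1⟩ := hγ
  have hN0 : (0 : ℝ) < N := by linarith
  have hN1 : 1 ≤ N := by exact_mod_cast hN0
  have : Nontrivial (EuclideanSpace ℝ (Fin N)) :=
    Module.nontrivial_of_finrank_pos (R := ℝ) (by rw [finrank_euclideanSpace_fin]; exact hN1)
  obtain ⟨M, hM⟩ := hφ.bounded_above_of_compact_support hφc
  have hM0 : 0 ≤ M := (norm_nonneg _).trans (hM 0)
  obtain ⟨R, hR1, hR⟩ : ∃ R : ℝ, 1 ≤ R ∧ ∀ y, R < ‖y‖ → φ y = 0 := by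
    obtain ⟨r, hr⟩ := hφc.isBounded.subset_closedBall 0
    refine ⟨max r 1, le_max_right _ _, fun y hy => image_eq_zero_of_notMem_tsupport fun h => ?_⟩
    have := mem_closedBall_zero_iff.1 (hr h)
    exact absurd hy (not_lt.2 (this.trans (le_max_left _ _)))
  set a : ℝ := (N : ℝ) - 2 * s with ha
  have hunonneg (x : EuclideanSpace ℝ (Fin N)) : 0 ≤ ∫ y, Hker N s γ x y * |φ y| :=
    integral_nonneg fun y => mul_nonneg (Hker_nonneg ..) (abs_nonneg _)
  have hae (z : EuclideanSpace ℝ (Fin N)) : ∀ᵐ y : EuclideanSpace ℝ (Fin N), y ≠ z := by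
    simp [ae_iff]
  set K : ℝ := ∫ y : EuclideanSpace ℝ (Fin N), truncPow a (3 * R) y with hK
  have hKi : Integrable (truncPow a (3 * R) : EuclideanSpace ℝ (Fin N) → ℝ) :=
    integrable_truncPow hN1 (by linarith) _
  have hnear (x : EuclideanSpace ℝ (Fin N)) (hx0 : x ≠ 0) (hx : ‖x‖ ≤ 2 * R) :
      ∫ y, Hker N s γ x y * |φ y| ≤ (4 * (3 * R) ^ γ * (K + K) * M) * ‖x‖ ^ (-γ) := by
    have hi := hKi.comp_sub_left x
    calc ∫ y, Hker N s γ x y * |φ y|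
        ≤ ∫ y, 4 * (3 * R) ^ γ * ‖x‖ ^ (-γ) * M *
            (truncPow a (3 * R) (x - y) + truncPow a (3 * R) y) := by
          refine integral_mono_of_nonneg
            (Filter.Eventually.of_forall fun y => mul_nonneg (Hker_nonneg ..) (abs_nonneg _))
            ((hi.add hKi).const_mul _) ?_
          filter_upwards [hae 0, hae x] with y hy0 hyx
          have hb : 0 ≤ truncPow a (3 * R) (x - y) + truncPow a (3 * R) y :=
            add_nonneg (truncPow_nonneg ..) (truncPow_nonneg ..)
          rcases lt_or_ge R ‖y‖ with h | h
          · rw [hR y h]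
            simp only [abs_zero, mul_zero]
            positivity
          · have hxy : ‖x - y‖ ≤ 3 * R := (norm_sub_le x y).trans (by linarith)
            rw [truncPow_of_le hxy, truncPow_of_le (h.trans (by linarith))]
            have hH : Hker N s γ x y ≤ _ :=
              kernel_near (norm_pos_iff.2 (sub_ne_zero.2 hyx.symm)) (norm_pos_iff.2 hx0)
                (norm_pos_iff.2 hy0) hxy (hx.trans (by linarith)) hγ0
                (by linarith : γ < (N : ℝ) - 2 * s)
            calc Hker N s γ x y * |φ y| ≤ _ * M :=
                  mul_le_mul hH (hM y) (abs_nonneg _) (by positivity)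
              _ = _ := by ring
      _ = _ := by
          rw [integral_const_mul, integral_add hi hKi,
            integral_sub_left_eq_self (truncPow a (3 * R)) volume x]
          ring
  set K' : ℝ := ∫ y : EuclideanSpace ℝ (Fin N), (truncPow 0 R y + truncPow γ R y) with hK'
  have hK'i : Integrable (fun y : EuclideanSpace ℝ (Fin N) => truncPow 0 R y + truncPow γ R y) :=
    (integrable_truncPow hN1 hN0 _).add (integrable_truncPow hN1 (by linarith) _)
  have hfar (x : EuclideanSpace ℝ (Fin N)) (hx : 2 * R < ‖x‖) :
      ∫ y, Hker N s γ x y * |φ y| ≤ (2 * 2 ^ a * K' * M) * ‖x‖ ^ (-(a - γ)) := by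
    calc ∫ y, Hker N s γ x y * |φ y|
        ≤ ∫ y, 2 * 2 ^ a * ‖x‖ ^ (-(a - γ)) * M *
            (truncPow 0 R y + truncPow γ R y) := by
          refine integral_mono_of_nonneg
            (Filter.Eventually.of_forall fun y => mul_nonneg (Hker_nonneg ..) (abs_nonneg _))
            (hK'i.const_mul _) ?_
          filter_upwards [hae 0] with y hy0
          have hb : 0 ≤ truncPow 0 R y + truncPow γ R y :=
            add_nonneg (truncPow_nonneg ..) (truncPow_nonneg ..)
          rcases lt_or_ge R ‖y‖ with h | h
          · rw [hR y h]
            simp only [abs_zero, mul_zero]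
            positivity
          · have hxy : ‖x‖ / 2 ≤ ‖x - y‖ := by
              have := norm_sub_norm_le x y
              linarith
            rw [truncPow_of_le h, truncPow_of_le h, neg_zero, Real.rpow_zero]
            have hH : Hker N s γ x y ≤ _ :=
              kernel_far (by linarith) (norm_pos_iff.2 hy0) hxy hγ0
                (by linarith : 2 * γ < (N : ℝ) - 2 * s)
            calc Hker N s γ x y * |φ y| ≤ _ * M :=
                  mul_le_mul hH (hM y) (abs_nonneg _) (by positivity)
              _ = _ := by ring
      _ = _ := by
          rw [integral_const_mul]
          ring
  set D₁ := 4 * (3 * R) ^ γ * (K + K) * M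
  set D₂ := 2 * 2 ^ a * K' * M
  set q : ℝ := 2 * s + 2 * (a - γ) with hq
  have hG : Integrable fun x : EuclideanSpace ℝ (Fin N) =>
      D₁ ^ 2 * truncPow (2 * s + 2 * γ) (2 * R) x + D₂ ^ 2 * (2 ^ q * (1 + ‖x‖) ^ (-q)) :=
    ((integrable_truncPow hN1 (by linarith) _).const_mul _).add
      (((integrable_one_add_norm
        (by rw [finrank_euclideanSpace_fin]; linarith)).const_mul _).const_mul _)
  have hsq (r b : ℝ) (hr : 0 < r) : r ^ (-(2 * s)) * (r ^ (-b)) ^ 2 = r ^ (-(2 * s + 2 * b)) := by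
    rw [← Real.rpow_natCast, ← Real.rpow_mul hr.le, ← Real.rpow_add hr]
    push_cast
    ring_nf
  refine (lintegral_mono_ae ?_).trans_lt hG.lintegral_lt_top
  filter_upwards [hae 0] with x hx0
  have hx : 0 < ‖x‖ := norm_pos_iff.2 hx0
  refine ENNReal.ofReal_le_ofReal ?_
  have h1 : 0 ≤ D₁ ^ 2 * truncPow (2 * s + 2 * γ) (2 * R) x :=
    mul_nonneg (sq_nonneg _) (truncPow_nonneg ..)
  have h2 : 0 ≤ D₂ ^ 2 * (2 ^ q * (1 + ‖x‖) ^ (-q)) := by positivity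
  rcases le_or_gt ‖x‖ (2 * R) with h | h
  · calc _ ≤ ‖x‖ ^ (-(2 * s)) * (D₁ * ‖x‖ ^ (-γ)) ^ 2 := by
          gcongr
          · exact hunonneg x
          · exact hnear x hx0 h
      _ = D₁ ^ 2 * (‖x‖ ^ (-(2 * s)) * (‖x‖ ^ (-γ)) ^ 2) := by ring
      _ = D₁ ^ 2 * truncPow (2 * s + 2 * γ) (2 * R) x := by rw [hsq _ _ hx, truncPow_of_le h]
      _ ≤ _ := by linarith
  · have hxq : ‖x‖ ^ (-q) ≤ 2 ^ q * (1 + ‖x‖) ^ (-q) := by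
      -- Since `|x| ≥ 1`, `1 + |x| ≤ 2|x|`.
      calc ‖x‖ ^ (-q) = 2 ^ q * (2 * ‖x‖) ^ (-q) := by
            rw [Real.mul_rpow (by norm_num) hx.le, ← mul_assoc, ← Real.rpow_add (by norm_num)]
            simp
        _ ≤ _ := by
            gcongr 2 ^ q * ?_
            exact Real.rpow_le_rpow_of_nonpos (by positivity) (by linarith) (by linarith)
    calc _ ≤ ‖x‖ ^ (-(2 * s)) * (D₂ * ‖x‖ ^ (-(a - γ))) ^ 2 := by
          gcongr
          · exact hunonneg x
          · exact hfar x h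
      _ = D₂ ^ 2 * (‖x‖ ^ (-(2 * s)) * (‖x‖ ^ (-(a - γ))) ^ 2) := by ring
      _ = D₂ ^ 2 * ‖x‖ ^ (-q) := by rw [hsq _ _ hx]
      _ ≤ D₂ ^ 2 * (2 ^ q * (1 + ‖x‖) ^ (-q)) := by gcongr
      _ ≤ _ := by linarith
end

section
/- Let Φ : (ℝ^N \ {0}) × (ℝ^N \ {0}) → [0,∞) be measurable with Φ(z,y) ≤ C₀·H(z,y) for some C₀ > 0 and all z ≠ y (z, y ≠ 0), and suppose that for every z ≠ 0 the map y ↦ Φ(z,y) is continuous on ℝ^N \ {0, z}. Let g : ℝ^N → ℝ be measurable with |g(z)| ≤ C₁·( 1/(1 + |z|^{N+2s}) + |z|^{−2s}·χ_K(z) ) for some C₁ > 0 and some compact K ⊂ ℝ^N. Then the map y ↦ ∫_{ℝ^N} Φ(z,y)·g(z) dz is continuous at every point x ∈ ℝ^N \ {0}. -/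
open MeasureTheory Real Set

lemma integrableOn_ball_rpow {N : ℕ} (hN : 0 < N) {b : ℝ} (hb : b < N) (r : ℝ) :
    IntegrableOn (fun z : EuclideanSpace ℝ (Fin N) => ‖z‖ ^ (-b)) (Metric.ball 0 r) := by
  have : Nonempty (Fin N) := ⟨⟨0, hN⟩⟩
  have : Nontrivial (EuclideanSpace ℝ (Fin N)) := inferInstance
  rcases le_or_gt r 0 with hr | hr
  · simp [Metric.ball_eq_empty.2 hr]
  rw [integrableOn_fun_norm_addHaar (μ := volume) (f := fun t : ℝ => t ^ (-b))]
  have h := (intervalIntegral.integrableOn_Ioo_rpow_iff (s := (N : ℝ) - 1 - b) hr).2 (by linarith)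
  refine h.congr_fun ?_ measurableSet_Ioo
  intro t ht
  have ht0 : 0 < t := ht.1
  simp only [finrank_euclideanSpace, Fintype.card_fin, smul_eq_mul]
  rw [← Real.rpow_natCast, ← Real.rpow_add ht0, Nat.cast_sub hN]
  congr 1
  push_cast
  ring

lemma integrable_decay {N : ℕ} {p : ℝ} (hp : (N : ℝ) < p) :
    Integrable (fun z : EuclideanSpace ℝ (Fin N) => 1 / (1 + ‖z‖ ^ p)) := by
  have hp0 : 0 < p := lt_of_le_of_lt (Nat.cast_nonneg N) hp
  have h := (integrable_one_add_norm (E := EuclideanSpace ℝ (Fin N)) (μ := volume) (r := p)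
    (by simpa using hp)).const_mul (2 ^ p)
  have hmeas : Measurable fun z : EuclideanSpace ℝ (Fin N) => 1 / (1 + ‖z‖ ^ p) := by fun_prop
  refine h.mono' hmeas.aestronglyMeasurable (.of_forall fun z => ?_)
  have ht : 0 ≤ ‖z‖ := norm_nonneg z
  generalize ‖z‖ = t at ht
  have h0 : 0 ≤ t ^ p := Real.rpow_nonneg ht p
  have key : (1 + t) ^ p ≤ 2 ^ p * (1 + t ^ p) := by
    rcases le_total t 1 with h1 | h1
    · calc (1 + t) ^ p ≤ 2 ^ p := Real.rpow_le_rpow (by linarith) (by linarith) hp0.le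
        _ ≤ 2 ^ p * (1 + t ^ p) := le_mul_of_one_le_right (by positivity) (by linarith)
    · calc (1 + t) ^ p ≤ (2 * t) ^ p := Real.rpow_le_rpow (by linarith) (by linarith) hp0.le
        _ = 2 ^ p * t ^ p := Real.mul_rpow (by norm_num) ht
        _ ≤ 2 ^ p * (1 + t ^ p) := by gcongr; linarith
  rw [Real.norm_of_nonneg (by positivity), Real.rpow_neg (by linarith), ← div_eq_mul_inv,
    div_le_div_iff₀ (by positivity) (by positivity), one_mul]
  exact key

/-- Integrability of the majorant used away from the pole: kernel bound times bound on `g`. -/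
lemma integrable_weight {N : ℕ} (hN : 0 < N) {s γ : ℝ} (hs : 0 < s) (hγ : 0 < γ)
    (hsγ : 2 * s + γ < N) {K : Set (EuclideanSpace ℝ (Fin N))} (hK : IsCompact K) :
    Integrable (fun z : EuclideanSpace ℝ (Fin N) => (1 + ‖z‖ ^ (-γ)) *
      (1 / (1 + ‖z‖ ^ ((N : ℝ) + 2*s)) + ‖z‖ ^ (-(2*s)) * K.indicator 1 z)) := by
  obtain ⟨R, hR⟩ := hK.isBounded.subset_ball 0
  have i1 := (integrable_decay (N := N) (p := N + 2 * s) (by linarith)).const_mul 2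
  have i2 := (integrableOn_ball_rpow hN (b := γ) (by linarith) 1).integrable_indicator
    measurableSet_ball
  have i3 := (((integrableOn_ball_rpow hN (b := 2 * s) (by linarith) R).mono_set
    hR).integrable_indicator hK.measurableSet)
  have i4 := (((integrableOn_ball_rpow hN (b := 2 * s + γ) (by linarith) R).mono_set
    hR).integrable_indicator hK.measurableSet)
  have hmK : Measurable (K.indicator (1 : EuclideanSpace ℝ (Fin N) → ℝ)) :=
    measurable_one.indicator hK.measurableSet
  refine (((i1.add i2).add i3).add i4).mono' (by fun_prop) ?_
  have hne : ∀ᵐ z : EuclideanSpace ℝ (Fin N), z ≠ 0 := by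
    have : Nonempty (Fin N) := ⟨⟨0, hN⟩⟩
    have : Nontrivial (EuclideanSpace ℝ (Fin N)) := inferInstance
    exact Measure.ae_ne volume 0
  filter_upwards [hne] with z hz
  have ht : 0 < ‖z‖ := norm_pos_iff.2 hz
  have e : ‖z‖ ^ (-(2 * s + γ)) = ‖z‖ ^ (-γ) * ‖z‖ ^ (-(2 * s)) := by
    rw [← Real.rpow_add ht]; congr 1; ring
  have hK0 : 0 ≤ K.indicator (1 : EuclideanSpace ℝ (Fin N) → ℝ) z :=
    indicator_nonneg (fun _ _ => zero_le_one) z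
  rw [Real.norm_of_nonneg (by positivity)]
  have hJ1 : 1 / (1 + ‖z‖ ^ ((N : ℝ) + 2*s)) ≤ 1 := by
    rw [div_le_one (by positivity)]
    linarith [Real.rpow_nonneg ht.le ((N : ℝ) + 2*s)]
  have hJ0 : 0 ≤ 1 / (1 + ‖z‖ ^ ((N : ℝ) + 2*s)) := by positivity
  have hu0 : 0 ≤ ‖z‖ ^ (-γ) := by positivity
  -- `|z|^{-γ}` only matters inside the unit ball, where the decay factor is at most `1`.
  have hA : ‖z‖ ^ (-γ) * (1 / (1 + ‖z‖ ^ ((N : ℝ) + 2*s))) ≤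
      1 / (1 + ‖z‖ ^ ((N : ℝ) + 2*s)) +
        (Metric.ball 0 1).indicator (fun z : EuclideanSpace ℝ (Fin N) => ‖z‖ ^ (-γ)) z := by
    by_cases h1 : z ∈ Metric.ball (0 : EuclideanSpace ℝ (Fin N)) 1
    · rw [indicator_of_mem h1]
      nlinarith
    · rw [indicator_of_notMem h1]
      have : ‖z‖ ^ (-γ) ≤ 1 :=
        Real.rpow_le_one_of_one_le_of_nonpos (by simpa using h1) (by linarith)
      nlinarith
  simp only [Pi.add_apply]
  by_cases hzK : z ∈ K
  · simp only [indicator_of_mem hzK, Pi.one_apply, e]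
    nlinarith
  · simp only [indicator_of_notMem hzK]
    nlinarith

lemma exists_small_ball {N : ℕ} (hN : 0 < N) {a : ℝ} (ha : a < N) {ε r : ℝ} (hε : 0 < ε)
    (hr : 0 < r) : ∃ δ, 0 < δ ∧ δ ≤ r ∧
      ∫ w in Metric.ball (0 : EuclideanSpace ℝ (Fin N)) (3 * δ), ‖w‖ ^ (-a) < ε := by
  have : Nonempty (Fin N) := ⟨⟨0, hN⟩⟩
  have : Nontrivial (EuclideanSpace ℝ (Fin N)) := inferInstance
  have hanti : Antitone fun n : ℕ =>
      Metric.ball (0 : EuclideanSpace ℝ (Fin N)) (3 * (r / (n + 1))) := by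
    intro m n hmn
    refine Metric.ball_subset_ball ?_
    gcongr
  have hlim := tendsto_setIntegral_of_antitone (μ := volume)
    (f := fun w : EuclideanSpace ℝ (Fin N) => ‖w‖ ^ (-a))
    (fun _ => measurableSet_ball) hanti ⟨0, integrableOn_ball_rpow hN ha _⟩
  have hinter : (⋂ n : ℕ, Metric.ball (0 : EuclideanSpace ℝ (Fin N)) (3 * (r / (n + 1)))) ⊆ {0} := by
    intro z hz
    have hz' : ∀ n : ℕ, ‖z‖ ≤ 3 * (r / (n + 1)) := fun n => by
      have := mem_iInter.1 hz n
      exact (mem_ball_zero_iff.1 this).le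
    have hl : Filter.Tendsto (fun n : ℕ => 3 * (r / ((n : ℝ) + 1))) Filter.atTop (nhds 0) := by
      have := (tendsto_one_div_add_atTop_nhds_zero_nat (𝕜 := ℝ)).const_mul (3 * r)
      simpa [div_eq_mul_inv, mul_assoc] using this
    exact norm_le_zero_iff.1 (ge_of_tendsto' hl hz')
  have h0 : volume (⋂ n : ℕ, Metric.ball (0 : EuclideanSpace ℝ (Fin N)) (3 * (r / (n + 1)))) = 0 :=
    measure_mono_null hinter (measure_singleton 0)
  rw [setIntegral_measure_zero _ h0] at hlim
  obtain ⟨n, hn⟩ := (hlim.eventually_lt_const hε).exists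
  exact ⟨r / (n + 1), by positivity, div_le_self hr.le (by linarith [n.cast_nonneg (α := ℝ)]), hn⟩

/-- Away from the origin, the leading singularity of `H` on the diagonal dominates. -/
lemma Hker_le_near {N : ℕ} {s γ m R : ℝ} (hγ : 0 < γ) (hm : 0 < m)
    {z y : EuclideanSpace ℝ (Fin N)} (hz : m ≤ ‖z‖) (hy : m ≤ ‖y‖) (hzy : z ≠ y)
    (hR : ‖z - y‖ ≤ R) :
    Hker N s γ z y ≤
      (1 + 2 * m ^ (-γ) * R ^ γ + m ^ (-γ) * m ^ (-γ) * R ^ (2 * γ)) *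
        ‖z - y‖ ^ (-((N : ℝ) - 2*s)) := by
  have hd : 0 < ‖z - y‖ := norm_pos_iff.2 (sub_ne_zero.2 hzy)
  have hzm : ‖z‖ ^ (-γ) ≤ m ^ (-γ) := Real.rpow_le_rpow_of_nonpos hm hz (by linarith)
  have hym : ‖y‖ ^ (-γ) ≤ m ^ (-γ) := Real.rpow_le_rpow_of_nonpos hm hy (by linarith)
  have e1 : ‖z - y‖ ^ (-((N : ℝ) - 2*s - γ)) ≤ R ^ γ * ‖z - y‖ ^ (-((N : ℝ) - 2*s)) := by
    rw [show -((N : ℝ) - 2*s - γ) = γ + -((N : ℝ) - 2*s) by ring, Real.rpow_add hd]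
    gcongr
  have e2 : ‖z - y‖ ^ (-((N : ℝ) - 2*s - 2*γ)) ≤
      R ^ (2 * γ) * ‖z - y‖ ^ (-((N : ℝ) - 2*s)) := by
    rw [show -((N : ℝ) - 2*s - 2*γ) = 2*γ + -((N : ℝ) - 2*s) by ring, Real.rpow_add hd]
    gcongr
  unfold Hker
  calc _ ≤ ‖z - y‖ ^ (-((N : ℝ) - 2*s)) +
        (m ^ (-γ) + m ^ (-γ)) * (R ^ γ * ‖z - y‖ ^ (-((N : ℝ) - 2*s))) +
        m ^ (-γ) * m ^ (-γ) * (R ^ (2 * γ) * ‖z - y‖ ^ (-((N : ℝ) - 2*s))) := by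
        gcongr
    _ = _ := by ring

/-- Away from the diagonal, `H` is only singular at the origin. -/
lemma Hker_le_far {N : ℕ} {s γ m δ : ℝ} (hγ : 0 < γ) (hγ' : 2 * γ < N - 2 * s) (hm : 0 < m)
    (hδ : 0 < δ) {z y : EuclideanSpace ℝ (Fin N)} (hy : m ≤ ‖y‖) (hd : δ ≤ ‖z - y‖) :
    Hker N s γ z y ≤
      (δ ^ (-((N : ℝ) - 2*s)) + (1 + m ^ (-γ)) * δ ^ (-((N : ℝ) - 2*s - γ)) +
        m ^ (-γ) * δ ^ (-((N : ℝ) - 2*s - 2*γ))) * (1 + ‖z‖ ^ (-γ)) := by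
  have hym : ‖y‖ ^ (-γ) ≤ m ^ (-γ) := Real.rpow_le_rpow_of_nonpos hm hy (by linarith)
  have e0 : ‖z - y‖ ^ (-((N : ℝ) - 2*s)) ≤ δ ^ (-((N : ℝ) - 2*s)) :=
    Real.rpow_le_rpow_of_nonpos hδ hd (by linarith)
  have e1 : ‖z - y‖ ^ (-((N : ℝ) - 2*s - γ)) ≤ δ ^ (-((N : ℝ) - 2*s - γ)) :=
    Real.rpow_le_rpow_of_nonpos hδ hd (by linarith)
  have e2 : ‖z - y‖ ^ (-((N : ℝ) - 2*s - 2*γ)) ≤ δ ^ (-((N : ℝ) - 2*s - 2*γ)) :=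
    Real.rpow_le_rpow_of_nonpos hδ hd (by linarith)
  unfold Hker
  have hu : 0 ≤ ‖z‖ ^ (-γ) := by positivity
  calc _ ≤ δ ^ (-((N : ℝ) - 2*s)) + (‖z‖ ^ (-γ) + m ^ (-γ)) * δ ^ (-((N : ℝ) - 2*s - γ)) +
        ‖z‖ ^ (-γ) * m ^ (-γ) * δ ^ (-((N : ℝ) - 2*s - 2*γ)) := by
        gcongr
    _ ≤ _ := by
        have p0 : 0 ≤ δ ^ (-((N : ℝ) - 2*s)) := by positivity
        have p1 : 0 ≤ δ ^ (-((N : ℝ) - 2*s - γ)) := by positivity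
        have p2 : 0 ≤ δ ^ (-((N : ℝ) - 2*s - 2*γ)) := by positivity
        have pm : 0 ≤ m ^ (-γ) := by positivity
        generalize ‖z‖ ^ (-γ) = u at *
        generalize δ ^ (-((N : ℝ) - 2*s)) = A at *
        generalize δ ^ (-((N : ℝ) - 2*s - γ)) = B at *
        generalize δ ^ (-((N : ℝ) - 2*s - 2*γ)) = C at *
        generalize m ^ (-γ) = M at *
        have : 0 ≤ A * u + B + M * u * B + M * C := by positivity
        linarith

theorem green_potential_continuity
    (N : ℕ) (s γ : ℝ) (hs : s ∈ Set.Ioo (0:ℝ) 1)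
    (hN : 2 * s < (N : ℝ)) (hγ : γ ∈ Set.Ioo (0:ℝ) (((N : ℝ) - 2*s)/2))
    (Φ : EuclideanSpace ℝ (Fin N) → EuclideanSpace ℝ (Fin N) → ℝ)
    (hΦmeas : Measurable fun p : EuclideanSpace ℝ (Fin N) × EuclideanSpace ℝ (Fin N) =>
      Φ p.1 p.2)
    (hΦnonneg : ∀ z y : EuclideanSpace ℝ (Fin N), z ≠ 0 → y ≠ 0 → 0 ≤ Φ z y)
    (C₀ : ℝ) (hC₀ : 0 < C₀)
    (hΦH : ∀ z y : EuclideanSpace ℝ (Fin N), z ≠ 0 → y ≠ 0 → z ≠ y →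
      Φ z y ≤ C₀ * Hker N s γ z y)
    (hΦcont : ∀ z : EuclideanSpace ℝ (Fin N), z ≠ 0 →
      ContinuousOn (Φ z) {y : EuclideanSpace ℝ (Fin N) | y ≠ 0 ∧ y ≠ z})
    (g : EuclideanSpace ℝ (Fin N) → ℝ) (hg : Measurable g)
    (C₁ : ℝ) (hC₁ : 0 < C₁)
    (K : Set (EuclideanSpace ℝ (Fin N))) (hK : IsCompact K)
    (hgb : ∀ z : EuclideanSpace ℝ (Fin N),
      |g z| ≤ C₁ * (1 / (1 + ‖z‖ ^ ((N : ℝ) + 2*s)) + ‖z‖ ^ (-(2*s)) * K.indicator 1 z)) :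
    ∀ x : EuclideanSpace ℝ (Fin N), x ≠ 0 →
      ContinuousAt (fun y => ∫ z, Φ z y * g z) x := by
  intro x hx
  obtain ⟨hs0, hs1⟩ := hs
  obtain ⟨hγ0, hγ1⟩ := hγ
  have hNpos : 0 < N := by
    have : (0 : ℝ) < N := by linarith
    exact_mod_cast this
  have : Nonempty (Fin N) := ⟨⟨0, hNpos⟩⟩
  have : Nontrivial (EuclideanSpace ℝ (Fin N)) := inferInstance
  have hxn : 0 < ‖x‖ := norm_pos_iff.2 hx
  obtain ⟨r, hr⟩ : ∃ r, r = ‖x‖ / 4 := ⟨_, rfl⟩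
  have hr0 : 0 < r := by rw [hr]; positivity
  have hynorm : ∀ y : EuclideanSpace ℝ (Fin N), ∀ ρ, ‖y - x‖ < ρ → 4 * r - ρ ≤ ‖y‖ := by
    intro y ρ hy
    have := norm_sub_norm_le x y
    rw [norm_sub_rev] at this
    linarith
  have hΦabs : ∀ z y : EuclideanSpace ℝ (Fin N), z ≠ 0 → y ≠ 0 → z ≠ y →
      |Φ z y| ≤ C₀ * Hker N s γ z y := fun z y hz hy hzy => by
    rw [abs_of_nonneg (hΦnonneg z y hz hy)]
    exact hΦH z y hz hy hzy
  have hFmeas : ∀ y, Measurable fun z => Φ z y * g z := fun y =>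
    (hΦmeas.comp (measurable_id.prodMk measurable_const)).mul hg
  -- `g` is bounded on `{|z| ≥ 2r}`.
  have hgloc : ∀ z : EuclideanSpace ℝ (Fin N), 2 * r ≤ ‖z‖ →
      |g z| ≤ C₁ * (1 + (2 * r) ^ (-(2*s))) := by
    intro z hz
    refine (hgb z).trans ?_
    have h1 : 1 / (1 + ‖z‖ ^ ((N : ℝ) + 2*s)) ≤ 1 := by
      rw [div_le_one (by positivity)]
      linarith [Real.rpow_nonneg (norm_nonneg z) ((N : ℝ) + 2*s)]
    have h2 : ‖z‖ ^ (-(2*s)) ≤ (2 * r) ^ (-(2*s)) :=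
      Real.rpow_le_rpow_of_nonpos (by positivity) hz (by linarith)
    have h3 : K.indicator (1 : EuclideanSpace ℝ (Fin N) → ℝ) z ≤ 1 :=
      indicator_le_self' (fun _ _ => zero_le_one) z
    have h4 : ‖z‖ ^ (-(2*s)) * K.indicator (1 : EuclideanSpace ℝ (Fin N) → ℝ) z ≤
        (2 * r) ^ (-(2*s)) :=
      (mul_le_of_le_one_right (by positivity) h3).trans h2
    gcongr
  obtain ⟨A, hA⟩ : ∃ A, A = C₀ * (1 + 2 * (2 * r) ^ (-γ) * (3 * r) ^ γ +
      (2 * r) ^ (-γ) * (2 * r) ^ (-γ) * (3 * r) ^ (2 * γ)) * (C₁ * (1 + (2 * r) ^ (-(2*s)))) :=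
    ⟨_, rfl⟩
  have hA0 : 0 < A := by rw [hA]; positivity
  have hnear : ∀ z y : EuclideanSpace ℝ (Fin N), ‖z - x‖ < 2 * r → ‖y - x‖ < r → z ≠ y →
      ‖Φ z y * g z‖ ≤ A * ‖z - y‖ ^ (-((N : ℝ) - 2*s)) := by
    intro z y hz hy hzy
    have hz2 : 2 * r ≤ ‖z‖ := by linarith [hynorm z _ hz]
    have hy2 : 2 * r ≤ ‖y‖ := by linarith [hynorm y _ hy]
    have hR : ‖z - y‖ ≤ 3 * r := by
      have := norm_sub_le_norm_sub_add_norm_sub z x y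
      rw [norm_sub_rev x y] at this
      linarith
    have h1 := hΦabs z y (norm_pos_iff.1 (by linarith)) (norm_pos_iff.1 (by linarith)) hzy
    have h2 := Hker_le_near (s := s) hγ0 (by positivity : 0 < 2 * r) hz2 hy2 hzy hR
    rw [norm_mul, Real.norm_eq_abs, Real.norm_eq_abs]
    calc _ ≤ (C₀ * ((1 + 2 * (2 * r) ^ (-γ) * (3 * r) ^ γ +
      (2 * r) ^ (-γ) * (2 * r) ^ (-γ) * (3 * r) ^ (2 * γ)) * ‖z - y‖ ^ (-((N : ℝ) - 2*s)))) *
        (C₁ * (1 + (2 * r) ^ (-(2*s)))) :=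
          mul_le_mul (h1.trans (by gcongr)) (hgloc z hz2) (abs_nonneg _) (by positivity)
      _ = _ := by rw [hA]; ring
  refine continuousAt_of_locally_uniform_approx_of_continuousAt fun u hu => ?_
  obtain ⟨ε, hε, hεu⟩ := Metric.mem_uniformity_dist.1 hu
  obtain ⟨δ, hδ0, hδr, hδ⟩ := exists_small_ball hNpos (a := (N : ℝ) - 2*s) (by linarith)
    (div_pos hε hA0) hr0
  obtain ⟨D, hD⟩ : ∃ D, D = C₀ * (δ ^ (-((N : ℝ) - 2*s)) +
      (1 + (2 * r) ^ (-γ)) * δ ^ (-((N : ℝ) - 2*s - γ)) +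
        (2 * r) ^ (-γ) * δ ^ (-((N : ℝ) - 2*s - 2*γ))) * C₁ := ⟨_, rfl⟩
  have hfar : ∀ z y : EuclideanSpace ℝ (Fin N), z ≠ 0 → z ∈ (Metric.ball x (2 * δ))ᶜ →
      ‖y - x‖ < δ → ‖Φ z y * g z‖ ≤ D * ((1 + ‖z‖ ^ (-γ)) *
      (1 / (1 + ‖z‖ ^ ((N : ℝ) + 2*s)) + ‖z‖ ^ (-(2*s)) * K.indicator 1 z)) := by
    intro z y hz0 hz hy
    have hz' : 2 * δ ≤ ‖z - x‖ := by simpa [dist_eq_norm] using hz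
    have hy2 : 2 * r ≤ ‖y‖ := by linarith [hynorm y _ hy]
    have hd : δ ≤ ‖z - y‖ := by
      have := norm_sub_le_norm_sub_add_norm_sub z y x
      linarith
    have hzy : z ≠ y := sub_ne_zero.1 (norm_pos_iff.1 (by linarith))
    have h1 := hΦabs z y hz0 (norm_pos_iff.1 (by linarith)) hzy
    have h2 := Hker_le_far (s := s) hγ0 (by linarith) (by positivity : 0 < 2 * r) hδ0 hy2 hd
    rw [norm_mul, Real.norm_eq_abs, Real.norm_eq_abs]
    calc _ ≤ (C₀ * ((δ ^ (-((N : ℝ) - 2*s)) +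
      (1 + (2 * r) ^ (-γ)) * δ ^ (-((N : ℝ) - 2*s - γ)) +
        (2 * r) ^ (-γ) * δ ^ (-((N : ℝ) - 2*s - 2*γ))) * (1 + ‖z‖ ^ (-γ)))) *
        (C₁ * (1 / (1 + ‖z‖ ^ ((N : ℝ) + 2*s)) + ‖z‖ ^ (-(2*s)) * K.indicator 1 z)) :=
          mul_le_mul (h1.trans (by gcongr)) (hgb z) (abs_nonneg _) (by positivity)
      _ = _ := by rw [hD]; ring
  have hW := (integrable_weight hNpos hs0 hγ0 (by linarith) hK).const_mul D
  have hfar_ae : ∀ y : EuclideanSpace ℝ (Fin N), ‖y - x‖ < δ →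
      ∀ᵐ z ∂(volume.restrict (Metric.ball x (2 * δ))ᶜ),
      ‖Φ z y * g z‖ ≤ D * ((1 + ‖z‖ ^ (-γ)) *
      (1 / (1 + ‖z‖ ^ ((N : ℝ) + 2*s)) + ‖z‖ ^ (-(2*s)) * K.indicator 1 z)) := by
    intro y hy
    filter_upwards [ae_restrict_mem measurableSet_ball.compl,
      ae_restrict_of_ae (Measure.ae_ne volume 0)] with z hz hz0
    exact hfar z y hz0 hz hy
  have hball : ∀ᶠ y in nhds x, ‖y - x‖ < δ := by
    filter_upwards [Metric.ball_mem_nhds x hδ0] with y hy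
    simpa [dist_eq_norm] using hy
  refine ⟨{y | ‖y - x‖ < δ}, hball, fun y => ∫ z in (Metric.ball x (2 * δ))ᶜ, Φ z y * g z, ?_, ?_⟩
  · refine continuousAt_of_dominated (bound := fun z => D * ((1 + ‖z‖ ^ (-γ)) *
      (1 / (1 + ‖z‖ ^ ((N : ℝ) + 2*s)) + ‖z‖ ^ (-(2*s)) * K.indicator 1 z)))
      (.of_forall fun y => (hFmeas y).aestronglyMeasurable) ?_ hW.integrableOn ?_
    · filter_upwards [hball] with y hy using hfar_ae y hy
    · filter_upwards [ae_restrict_mem measurableSet_ball.compl,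
        ae_restrict_of_ae (Measure.ae_ne volume 0)] with z hz hz0
      have hxz : x ≠ z := by
        rintro rfl
        exact hz (Metric.mem_ball_self (by positivity))
      have hopen : IsOpen {y : EuclideanSpace ℝ (Fin N) | y ≠ 0 ∧ y ≠ z} :=
        isOpen_ne.inter isOpen_ne
      exact ((hΦcont z hz0).continuousAt (hopen.mem_nhds ⟨hx, hxz⟩)).mul continuousAt_const
  · intro y hy
    have hy : ‖y - x‖ < δ := hy
    apply hεu
    have hsub : Metric.ball x (2 * δ) ⊆ Metric.ball y (3 * δ) := by
      refine Metric.ball_subset_ball' ?_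
      rw [dist_comm, dist_eq_norm]
      linarith
    have hpre : (fun z => z - y) ⁻¹' Metric.ball 0 (3 * δ) = Metric.ball y (3 * δ) := by
      ext z
      simp [dist_eq_norm]
    have hmp : MeasurePreserving (fun z : EuclideanSpace ℝ (Fin N) => z - y) volume volume :=
      measurePreserving_sub_right volume y
    have hemb : MeasurableEmbedding (fun z : EuclideanSpace ℝ (Fin N) => z - y) :=
      measurableEmbedding_subRight y
    have hkint : IntegrableOn (fun z => ‖z - y‖ ^ (-((N : ℝ) - 2*s))) (Metric.ball y (3 * δ)) := by
      have h := (hmp.integrableOn_comp_preimage hemb).2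
        (integrableOn_ball_rpow hNpos (b := (N : ℝ) - 2*s) (by linarith) (3 * δ))
      rwa [hpre] at h
    have hkval : ∫ z in Metric.ball y (3 * δ), ‖z - y‖ ^ (-((N : ℝ) - 2*s)) =
        ∫ w in Metric.ball (0 : EuclideanSpace ℝ (Fin N)) (3 * δ), ‖w‖ ^ (-((N : ℝ) - 2*s)) := by
      rw [← hpre]
      exact hmp.setIntegral_preimage_emb hemb
        (fun w : EuclideanSpace ℝ (Fin N) => ‖w‖ ^ (-((N : ℝ) - 2*s))) _
    have hnear_ae : ∀ᵐ z ∂(volume.restrict (Metric.ball x (2 * δ))),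
        ‖Φ z y * g z‖ ≤ A * ‖z - y‖ ^ (-((N : ℝ) - 2*s)) := by
      filter_upwards [ae_restrict_mem measurableSet_ball,
        ae_restrict_of_ae (Measure.ae_ne volume y)] with z hz hzy
      refine hnear z y ?_ (by linarith) hzy
      rw [mem_ball_iff_norm] at hz
      linarith
    have hk2 := (hkint.mono_set hsub).const_mul A
    have hin : IntegrableOn (fun z => Φ z y * g z) (Metric.ball x (2 * δ)) :=
      hk2.mono' (hFmeas y).aestronglyMeasurable hnear_ae
    have hout : IntegrableOn (fun z => Φ z y * g z) (Metric.ball x (2 * δ))ᶜ :=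
      hW.integrableOn.mono' (hFmeas y).aestronglyMeasurable (hfar_ae y hy)
    have hF : Integrable (fun z => Φ z y * g z) := by
      rw [← integrableOn_univ, ← union_compl_self (Metric.ball x (2 * δ))]
      exact hin.union hout
    rw [← integral_add_compl (measurableSet_ball (x := x) (ε := 2 * δ)) hF, dist_eq_norm,
      add_sub_cancel_right]
    calc ‖∫ z in Metric.ball x (2 * δ), Φ z y * g z‖
        ≤ ∫ z in Metric.ball x (2 * δ), A * ‖z - y‖ ^ (-((N : ℝ) - 2*s)) :=
          norm_integral_le_of_norm_le hk2 hnear_ae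
      _ ≤ ∫ z in Metric.ball y (3 * δ), A * ‖z - y‖ ^ (-((N : ℝ) - 2*s)) :=
          setIntegral_mono_set (hkint.const_mul A) (.of_forall fun z => by positivity)
            (.of_forall hsub)
      _ = A * ∫ w in Metric.ball (0 : EuclideanSpace ℝ (Fin N)) (3 * δ),
            ‖w‖ ^ (-((N : ℝ) - 2*s)) := by
          rw [integral_const_mul, hkval]
      _ < A * (ε / A) := by gcongr
      _ = ε := by field_simp
end

section
/- Let s ∈ (0,1) and N ∈ ℕ with N > 2s, and set Λ_{N,s} := 2^{2s}·Γ((N+2s)/4)² / Γ((N−2s)/4)². For every θ with 0 < θ ≤ Λ_{N,s} there exists a unique γ with 0 < γ ≤ (N−2s)/2 such that θ = 2^{2s}·Γ((γ+2s)/2)·Γ((N−γ)/2) / ( Γ((N−γ−2s)/2)·Γ(γ/2) ). Moreover θ = Λ_{N,s} if and only if γ = (N−2s)/2. -/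
open Real Set

/-!
With `a = γ/2`, `b = (N - γ - 2s)/2`, the right-hand side is `2^(2s)` times
`Γ(a+s) Γ(b+s) / (Γ(a) Γ(b))`, where `a + b = (N - 2s)/2` is fixed. By Euler's product this quotient
is the limit of `n^(2s) ∏_{j ≤ n} (a+j)(b+j) / ((a+s+j)(b+s+j))`. For a fixed sum `a + b` each factor
is strictly increasing in the product `a b`, which in turn is strictly increasing in `a ≤ b`.
The limit gives weak monotonicity (`Gamma_quot_le`); splitting off the factor `j = 0` with the
functional equation of `Γ` makes it strict (`Gamma_quot_lt`).

Surjectivity onto `(0, Λ]` is the intermediate value theorem: writing `1/Γ(a) = a/Γ(a+1)` extends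
the quotient continuously by `0` at `γ = 0`, and its value at `γ = (N - 2s)/2` is `Λ`.
-/

lemma GammaSeq_mul_four (x y z w : ℝ) {n : ℕ} (hn : 0 < n) :
    GammaSeq x n * GammaSeq y n * GammaSeq z n * GammaSeq w n =
      (n : ℝ) ^ (x + y + z + w) * (n.factorial : ℝ) ^ 4 /
        ∏ j ∈ Finset.range (n + 1), ((x + j) * (y + j) * (z + j) * (w + j)) := by
  have hn' : (0 : ℝ) < n := by exact_mod_cast hn
  simp only [GammaSeq, Finset.prod_mul_distrib, Real.rpow_add hn', div_mul_div_comm]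
  congr 1
  ring

/-- One factor of Euler's product: for fixed `a + b`, the quotient `a b / ((a+s)(b+s))` is
increasing in `a b` (stated without division). -/
lemma factor_le {a b a' b' s : ℝ} (ha : 0 < a) (hb : 0 < b) (hs : 0 < s)
    (hsum : a + b = a' + b') (hprod : a * b ≤ a' * b') :
    a * b * ((a' + s) * (b' + s)) ≤ a' * b' * ((a + s) * (b + s)) := by
  have h1 : 0 ≤ (a' * b' - a * b) * (s * (a + b) + s ^ 2) :=
    mul_nonneg (by linarith) (by positivity)
  have h2 : a' * b' * ((a + s) * (b + s)) - a * b * ((a' + s) * (b' + s)) =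
      (a' * b' - a * b) * (s * (a + b) + s ^ 2) + a * b * s * ((a + b) - (a' + b')) := by ring
  rw [hsum, sub_self, mul_zero, add_zero, ← hsum] at h2
  linarith

lemma Gamma_quot_le {a b a' b' s : ℝ} (ha : 0 < a) (hb : 0 < b) (ha' : 0 < a') (hb' : 0 < b')
    (hs : 0 < s) (hsum : a + b = a' + b') (hprod : a * b ≤ a' * b') :
    Gamma (a + s) * Gamma (b + s) * Gamma a' * Gamma b' ≤
      Gamma (a' + s) * Gamma (b' + s) * Gamma a * Gamma b := by
  refine le_of_tendsto_of_tendsto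
    ((((GammaSeq_tendsto_Gamma (a + s)).mul (GammaSeq_tendsto_Gamma (b + s))).mul
      (GammaSeq_tendsto_Gamma a')).mul (GammaSeq_tendsto_Gamma b'))
    ((((GammaSeq_tendsto_Gamma (a' + s)).mul (GammaSeq_tendsto_Gamma (b' + s))).mul
      (GammaSeq_tendsto_Gamma a)).mul (GammaSeq_tendsto_Gamma b)) ?_
  filter_upwards [Filter.eventually_gt_atTop 0] with n hn
  rw [GammaSeq_mul_four _ _ _ _ hn, GammaSeq_mul_four _ _ _ _ hn,
    show a + s + (b + s) + a' + b' = a' + s + (b' + s) + a + b by linarith]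
  refine div_le_div_of_nonneg_left (by positivity)
    (Finset.prod_pos fun j _ => by positivity)
    (Finset.prod_le_prod (fun j _ => by positivity) fun j _ => ?_)
  have hj : (0 : ℝ) ≤ j := Nat.cast_nonneg j
  have hp : (a + j) * (b + j) ≤ (a' + j) * (b' + j) := by
    have : (j : ℝ) * (a + b) = j * (a' + b') := by rw [hsum]
    nlinarith
  have := factor_le (a := a + j) (b := b + j) (a' := a' + j) (b' := b' + j)
    (by positivity) (by positivity) hs (by linarith) hp
  linarith

lemma Gamma_quot_lt {a b a' b' s : ℝ} (ha : 0 < a) (hb : 0 < b) (ha' : 0 < a') (hb' : 0 < b')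
    (hs : 0 < s) (hsum : a + b = a' + b') (hprod : a * b < a' * b') :
    Gamma (a + s) * Gamma (b + s) * Gamma a' * Gamma b' <
      Gamma (a' + s) * Gamma (b' + s) * Gamma a * Gamma b := by
  have h := Gamma_quot_le (a := a + 1) (b := b + 1) (a' := a' + 1) (b' := b' + 1) (s := s)
    (by linarith) (by linarith) (by linarith) (by linarith) hs (by linarith) (by nlinarith)
  rw [add_right_comm a, add_right_comm b, add_right_comm a', add_right_comm b',
    Gamma_add_one (by positivity), Gamma_add_one (by positivity), Gamma_add_one (by positivity),
    Gamma_add_one (by positivity), Gamma_add_one (by positivity), Gamma_add_one (by positivity),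
    Gamma_add_one (by positivity), Gamma_add_one (by positivity)] at h
  have hfac : a * b * ((a' + s) * (b' + s)) < a' * b' * ((a + s) * (b + s)) := by
    have h1 : 0 < (a' * b' - a * b) * (s * (a + b) + s ^ 2) :=
      mul_pos (by linarith) (by positivity)
    have h2 : a' * b' * ((a + s) * (b + s)) - a * b * ((a' + s) * (b' + s)) =
        (a' * b' - a * b) * (s * (a + b) + s ^ 2) + a * b * s * ((a + b) - (a' + b')) := by ring
    rw [hsum, sub_self, mul_zero, add_zero, ← hsum] at h2
    linarith
  have hR : 0 < Gamma (a' + s) * Gamma (b' + s) * Gamma a * Gamma b := by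
    have := Gamma_pos_of_pos ha
    have := Gamma_pos_of_pos hb
    have := Gamma_pos_of_pos (add_pos ha' hs)
    have := Gamma_pos_of_pos (add_pos hb' hs)
    positivity
  -- Compare through the larger coefficient `a' b' (a+s)(b+s)`.
  refine lt_of_mul_lt_mul_left (a := a' * b' * ((a + s) * (b + s))) ?_ (by positivity)
  have := mul_lt_mul_of_pos_right hfac hR
  linarith

/-- The right-hand side of the correspondence as a function of `γ`, for a real dimension `N`. -/
noncomputable def thetaFun (N s γ : ℝ) : ℝ :=
  2 ^ (2*s) * Real.Gamma ((γ + 2*s)/2) * Real.Gamma ((N - γ)/2) /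
    (Real.Gamma ((N - γ - 2*s)/2) * Real.Gamma (γ/2))

lemma thetaFun_lt {N s γ γ' : ℝ} (hs : 0 < s) (h0 : 0 < γ) (h : γ < γ')
    (h' : γ' ≤ (N - 2*s)/2) : thetaFun N s γ < thetaFun N s γ' := by
  have key := Gamma_quot_lt (a := γ/2) (b := (N - γ - 2*s)/2) (a' := γ'/2)
    (b' := (N - γ' - 2*s)/2) (s := s) (by linarith) (by linarith) (by linarith) (by linarith)
    hs (by ring) (by nlinarith)
  rw [show γ/2 + s = (γ + 2*s)/2 by ring, show γ'/2 + s = (γ' + 2*s)/2 by ring,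
    show (N - γ - 2*s)/2 + s = (N - γ)/2 by ring,
    show (N - γ' - 2*s)/2 + s = (N - γ')/2 by ring] at key
  have p1 : 0 < Gamma (γ/2) := Gamma_pos_of_pos (by linarith)
  have p2 : 0 < Gamma (γ'/2) := Gamma_pos_of_pos (by linarith)
  have p3 : 0 < Gamma ((N - γ - 2*s)/2) := Gamma_pos_of_pos (by linarith)
  have p4 : 0 < Gamma ((N - γ' - 2*s)/2) := Gamma_pos_of_pos (by linarith)
  have p5 : (0:ℝ) < 2 ^ (2*s) := by positivity
  unfold thetaFun
  rw [div_lt_div_iff₀ (by positivity) (by positivity)]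
  have := mul_lt_mul_of_pos_left key p5
  linarith

lemma thetaFun_right {N s : ℝ} :
    thetaFun N s ((N - 2*s)/2) = 2 ^ (2*s) * Real.Gamma ((N + 2*s)/4) ^ 2 /
      Real.Gamma ((N - 2*s)/4) ^ 2 := by
  unfold thetaFun
  rw [show ((N - 2*s)/2 + 2*s)/2 = (N + 2*s)/4 by ring,
    show (N - (N - 2*s)/2)/2 = (N + 2*s)/4 by ring,
    show (N - (N - 2*s)/2 - 2*s)/2 = (N - 2*s)/4 by ring,
    show (N - 2*s)/2/2 = (N - 2*s)/4 by ring]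
  ring

lemma exists_thetaFun_eq {N s θ : ℝ} (hs : 0 < s) (hN : 2 * s < N) (hθ : 0 < θ)
    (hθΛ : θ ≤ thetaFun N s ((N - 2*s)/2)) :
    ∃ γ, 0 < γ ∧ γ ≤ (N - 2*s)/2 ∧ θ = thetaFun N s γ := by
  -- The continuous extension of `thetaFun` to `γ = 0`.
  let g : ℝ → ℝ := fun γ => (γ/2) * (2 ^ (2*s) * Real.Gamma ((γ + 2*s)/2) *
    Real.Gamma ((N - γ)/2)) / (Real.Gamma ((N - γ - 2*s)/2) * Real.Gamma (γ/2 + 1))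
  have hg : ∀ γ, 0 < γ → g γ = thetaFun N s γ := by
    intro γ h
    simp only [g, thetaFun]
    rw [Gamma_add_one (by positivity), mul_left_comm (Real.Gamma ((N - γ - 2*s)/2)),
      mul_div_mul_left _ _ (by positivity)]
  have hΓ : ∀ (f : ℝ → ℝ) (x : ℝ), Continuous f → 0 < f x →
      ContinuousAt (fun y => Real.Gamma (f y)) x := fun f x hf hx =>
    ContinuousAt.comp (f := f) (g := Real.Gamma)
      (differentiableAt_Gamma (fun m => by
        have : (0:ℝ) ≤ m := Nat.cast_nonneg m
        linarith)).continuousAt hf.continuousAt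
  have hc : ContinuousOn g (Icc 0 ((N - 2*s)/2)) := by
    rintro x ⟨hx0, hx1⟩
    refine ContinuousAt.continuousWithinAt ?_
    have c1 := hΓ (fun y => (y + 2*s)/2) x (by fun_prop) (by linarith)
    have c2 := hΓ (fun y => (N - y)/2) x (by fun_prop) (by linarith)
    have c3 := hΓ (fun y => (N - y - 2*s)/2) x (by fun_prop) (by linarith)
    have c4 := hΓ (fun y => y/2 + 1) x (by fun_prop) (by linarith)
    have p3 : 0 < Gamma ((N - x - 2*s)/2) := Gamma_pos_of_pos (by linarith)
    have p4 : 0 < Gamma (x/2 + 1) := Gamma_pos_of_pos (by linarith)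
    exact ((continuousAt_id.div_const 2).mul ((continuousAt_const.mul c1).mul c2)).div
      (c3.mul c4) (mul_pos p3 p4).ne'
  have hM : 0 < (N - 2*s)/2 := by linarith
  have hg0 : g 0 = 0 := by simp [g]
  obtain ⟨γ, ⟨h0, h1⟩, h2⟩ := intermediate_value_Icc hM.le hc
    (show θ ∈ Icc (g 0) (g ((N - 2*s)/2)) from ⟨by rw [hg0]; exact hθ.le, by rwa [hg _ hM]⟩)
  have hpos : 0 < γ := by
    rcases h0.eq_or_lt with h | h
    · rw [← h, hg0] at h2
      exact absurd h2 hθ.ne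
    · exact h
  exact ⟨γ, hpos, h1, by rw [← hg γ hpos, h2]⟩

theorem theta_gamma_correspondence
    (N : ℕ) (s : ℝ) (hs : s ∈ Set.Ioo (0:ℝ) 1) (hN : 2 * s < (N : ℝ))
    (Λ : ℝ)
    (hΛ : Λ = 2 ^ (2*s) * Real.Gamma (((N : ℝ) + 2*s)/4) ^ 2 /
      Real.Gamma (((N : ℝ) - 2*s)/4) ^ 2)
    (θ : ℝ) (hθ : 0 < θ) (hθΛ : θ ≤ Λ) :
    (∃! γ : ℝ, 0 < γ ∧ γ ≤ ((N : ℝ) - 2*s)/2 ∧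
      θ = 2 ^ (2*s) * Real.Gamma ((γ + 2*s)/2) * Real.Gamma (((N : ℝ) - γ)/2) /
        (Real.Gamma (((N : ℝ) - γ - 2*s)/2) * Real.Gamma (γ/2))) ∧
    (∀ γ : ℝ, 0 < γ → γ ≤ ((N : ℝ) - 2*s)/2 →
      θ = 2 ^ (2*s) * Real.Gamma ((γ + 2*s)/2) * Real.Gamma (((N : ℝ) - γ)/2) /
        (Real.Gamma (((N : ℝ) - γ - 2*s)/2) * Real.Gamma (γ/2)) →
      (θ = Λ ↔ γ = ((N : ℝ) - 2*s)/2)) := by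
  rw [← thetaFun_right] at hΛ
  have huniq : ∀ γ γ' : ℝ, 0 < γ → γ ≤ ((N : ℝ) - 2*s)/2 → 0 < γ' → γ' ≤ ((N : ℝ) - 2*s)/2 →
      thetaFun N s γ = thetaFun N s γ' → γ = γ' := by
    intro γ γ' h0 h1 h0' h1' h
    rcases lt_trichotomy γ γ' with hlt | heq | hlt
    · exact absurd h (thetaFun_lt hs.1 h0 hlt h1').ne
    · exact heq
    · exact absurd h.symm (thetaFun_lt hs.1 h0' hlt h1).ne
  have hM : 0 < ((N : ℝ) - 2*s)/2 := by linarith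
  refine ⟨?_, fun γ h0 h1 h2 => ?_⟩
  · obtain ⟨γ, h0, h1, h2⟩ := exists_thetaFun_eq hs.1 hN hθ (hΛ ▸ hθΛ)
    exact ⟨γ, ⟨h0, h1, h2⟩, fun γ' ⟨h0', h1', h2'⟩ =>
      huniq γ' γ h0' h1' h0 h1 (h2'.symm.trans h2)⟩
  · change θ = thetaFun N s γ at h2
    constructor
    · intro h
      exact huniq γ _ h0 h1 hM le_rfl (by rw [← h2, h, hΛ])
    · intro h
      rw [h2, hΛ, h]
end
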